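/- Let d ≥ 1, ν ∈ (0,2), γ ≤ 0, N ≥ 1. The weighted fractional Fisher information I^N_{ν,γ} satisfies: (a) convexity: for all probability densities G, H on ℝ^{dN} and all t ∈ [0,1], I^N_{ν,γ}(tG + (1−t)H) ≤ t I^N_{ν,γ}(G) + (1−t) I^N_{ν,γ}(H); (b) lower semicontinuity: if (G_n) are probability densities on ℝ^{dN} such that the measures G_n dx converge weakly to G dx for a probability density G, then liminf_{n→∞} I^N_{ν,γ}(G_n) ≥ I^N_{ν,γ}(G); (c) tensorization: for every probability density f on ℝ^d, I^N_{ν,γ}(f^{⊗N}) = |⟨·⟩^{γ/2} √f|²_{H^{ν/2}(ℝ^d)}. -/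

import Mathlib

open MeasureTheory ENNReal

noncomputable section

/-- `ℝ^d` as a Euclidean space. -/
abbrev Euc (d : ℕ) := EuclideanSpace ℝ (Fin d)

/-- Japanese bracket `⟨x⟩ = √(1+|x|²)`. -/
def jap {d : ℕ} (x : Euc d) : ℝ := Real.sqrt (1 + ‖x‖^2)

/-- Fractional Sobolev seminorm squared `|f|²_{H^s(ℝ^d)}`, valued in `[0,∞]`. -/
def fracSobolevSq (d : ℕ) (s : ℝ) (f : Euc d → ℝ) : ℝ≥0∞ :=
  ∫⁻ x : Euc d, ∫⁻ y : Euc d, ENNReal.ofReal ((f x - f y)^2 / ‖x - y‖ ^ ((d : ℝ) + 2*s))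

/-- Weighted normalized fractional Fisher information `I^N_{ν,γ}`, valued in `[0,∞]`. -/
def fisherInfo (d N : ℕ) (ν γ : ℝ) (G : (Fin N → Euc d) → ℝ) : ℝ≥0∞ :=
  (N : ℝ≥0∞)⁻¹ * ∑ i : Fin N, ∫⁻ V : Fin N → Euc d, ∫⁻ w : Euc d,
    ENNReal.ofReal ((jap (V i) ^ (γ/2) * Real.sqrt (G V)
      - jap w ^ (γ/2) * Real.sqrt (G (Function.update V i w)))^2
      / ‖V i - w‖ ^ ((d : ℝ) + ν))

/-- A probability density: measurable, nonnegative, total mass one. -/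
def IsProbDensity {α : Type*} [MeasureSpace α] (f : α → ℝ) : Prop :=
  Measurable f ∧ (∀ x, 0 ≤ f x) ∧ ∫⁻ x, ENNReal.ofReal (f x) = 1

/-- A symmetric (exchangeable) probability density on `(ℝ^d)^N`. -/
def IsSymDensity (d N : ℕ) (F : (Fin N → Euc d) → ℝ) : Prop :=
  IsProbDensity F ∧ ∀ (σ : Equiv.Perm (Fin N)) (V : Fin N → Euc d), F (V ∘ σ) = F V


section LSC
open Filter Topology

lemma fi_slice_eq {E Z : Type*} [TopologicalSpace E] [MeasureSpace E] [MeasureSpace Z]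
    [SFinite (volume : Measure E)] [SFinite (volume : Measure Z)]
    {κ : Z → ℝ} (hκ : Integrable κ) {ψ : Z × E → ℝ} (hψm : Measurable ψ)
    {C : ℝ} (hC : ∀ p, |ψ p| ≤ C) {g : E → ℝ} (hg : Integrable g) :
    Integrable (fun p : Z × E => ψ p * (κ p.1 * g p.2)) ∧
    ∫ p : Z × E, ψ p * (κ p.1 * g p.2) = ∫ V, (∫ z, κ z * ψ (z, V)) * g V := by
  have hI : Integrable (fun p : Z × E => ψ p * (κ p.1 * g p.2)) :=
    (hκ.mul_prod hg).bdd_mul (c := C) hψm.aestronglyMeasurable (by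
      filter_upwards with p using hC p)
  refine ⟨hI, ?_⟩
  rw [show (volume : Measure (Z × E)) = (volume : Measure Z).prod volume from rfl,
    integral_prod_symm _ hI]
  refine integral_congr_ae ?_
  filter_upwards with V
  rw [← integral_mul_const]
  refine integral_congr_ae ?_
  filter_upwards with z
  ring

lemma fi_conv1 {E Z : Type*} [TopologicalSpace E] [FirstCountableTopology E]
    [MeasureSpace E] [BorelSpace E] [SecondCountableTopology E]
    [TopologicalSpace Z] [MeasureSpace Z] [BorelSpace Z] [SecondCountableTopology Z]
    [SFinite (volume : Measure E)] [SFinite (volume : Measure Z)]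
    {κ : Z → ℝ} (hκ : Integrable κ) {ψ : Z × E → ℝ} (hψ : Continuous ψ)
    {C : ℝ} (hC : ∀ p, |ψ p| ≤ C)
    {gs : ℕ → E → ℝ} {g : E → ℝ} (hgs : ∀ n, Integrable (gs n)) (hg : Integrable g)
    (hconv : ∀ φ : BoundedContinuousFunction E ℝ,
      Tendsto (fun n => ∫ V, φ V * gs n V) atTop (𝓝 (∫ V, φ V * g V))) :
    Tendsto (fun n => ∫ p : Z × E, ψ p * (κ p.1 * gs n p.2)) atTop
      (𝓝 (∫ p : Z × E, ψ p * (κ p.1 * g p.2))) := by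
  have hcont : Continuous fun V : E => ∫ z, κ z * ψ (z, V) := by
    refine continuous_of_dominated (bound := fun z => |κ z| * C) ?_ ?_ (hκ.abs.mul_const C) ?_
    · intro V
      exact hκ.1.mul (by fun_prop : Continuous fun z => ψ (z, V)).measurable.aestronglyMeasurable
    · intro V
      filter_upwards with z
      rw [Real.norm_eq_abs, abs_mul]
      exact mul_le_mul_of_nonneg_left (hC _) (abs_nonneg _)
    · filter_upwards with z
      fun_prop
  have hbd : ∀ V : E, ‖∫ z, κ z * ψ (z, V)‖ ≤ ∫ z, |κ z| * C := by
    intro V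
    refine norm_integral_le_of_norm_le (hκ.abs.mul_const C) ?_
    filter_upwards with z
    rw [Real.norm_eq_abs, abs_mul]
    exact mul_le_mul_of_nonneg_left (hC _) (abs_nonneg _)
  have := hconv (BoundedContinuousFunction.ofNormedAddCommGroup _ hcont _ hbd)
  simp only [BoundedContinuousFunction.coe_ofNormedAddCommGroup] at this
  rw [(fi_slice_eq hκ hψ.measurable hC hg).2]
  simp_rw [fun n => (fi_slice_eq hκ hψ.measurable hC (hgs n)).2]
  exact this

/-- The shear `(z, V) ↦ (z, V + ι z)`. -/
def fiShear {E Z : Type*} [TopologicalSpace E] [AddCommGroup E] [IsTopologicalAddGroup E]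
    [TopologicalSpace Z] {ι : Z → E} (hι : Continuous ι) : (Z × E) ≃ₜ (Z × E) where
  toFun p := (p.1, p.2 + ι p.1)
  invFun p := (p.1, p.2 - ι p.1)
  left_inv p := by simp
  right_inv p := by simp
  continuous_toFun := by fun_prop
  continuous_invFun := by fun_prop

lemma fiShear_mp {E Z : Type*} [TopologicalSpace E] [AddCommGroup E] [IsTopologicalAddGroup E]
    [MeasureSpace E] [BorelSpace E] [SecondCountableTopology E]
    [TopologicalSpace Z] [MeasureSpace Z] [BorelSpace Z] [SecondCountableTopology Z]
    [SFinite (volume : Measure E)] [SFinite (volume : Measure Z)]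
    [(volume : Measure E).IsAddRightInvariant] {ι : Z → E} (hι : Continuous ι) :
    MeasurePreserving (fiShear hι) (volume : Measure (Z × E)) volume := by
  refine MeasurePreserving.skew_product (g := fun z V => V + ι z)
    (MeasurePreserving.id (volume : Measure Z)) ?_ ?_
  · exact (by fun_prop : Continuous fun p : Z × E => p.2 + ι p.1).measurable
  · filter_upwards with z
    exact map_add_right_eq_self _ _

lemma fi_conv2 {E Z : Type*} [TopologicalSpace E] [AddCommGroup E] [IsTopologicalAddGroup E]
    [MeasureSpace E] [BorelSpace E] [SecondCountableTopology E]
    [TopologicalSpace Z] [MeasureSpace Z] [BorelSpace Z] [SecondCountableTopology Z]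
    [SFinite (volume : Measure E)] [SFinite (volume : Measure Z)]
    [(volume : Measure E).IsAddRightInvariant] {ι : Z → E} (hι : Continuous ι)
    {κ : Z → ℝ} (hκ : Integrable κ) {ψ : Z × E → ℝ} (hψ : Continuous ψ)
    {C : ℝ} (hC : ∀ p, |ψ p| ≤ C)
    {gs : ℕ → E → ℝ} {g : E → ℝ} (hgs : ∀ n, Integrable (gs n)) (hg : Integrable g)
    (hconv : ∀ φ : BoundedContinuousFunction E ℝ,
      Tendsto (fun n => ∫ V, φ V * gs n V) atTop (𝓝 (∫ V, φ V * g V))) :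
    Tendsto (fun n => ∫ p : Z × E, ψ p * (κ p.1 * gs n (p.2 + ι p.1))) atTop
      (𝓝 (∫ p : Z × E, ψ p * (κ p.1 * g (p.2 + ι p.1)))) := by
  have key : ∀ h : E → ℝ, ∫ p : Z × E, ψ p * (κ p.1 * h (p.2 + ι p.1))
      = ∫ p : Z × E, ψ (p.1, p.2 - ι p.1) * (κ p.1 * h p.2) := by
    intro h
    rw [← (fiShear_mp hι).integral_comp (fiShear hι).measurableEmbedding
      (fun p : Z × E => ψ (p.1, p.2 - ι p.1) * (κ p.1 * h p.2))]
    simp [fiShear]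
  simp_rw [key]
  exact fi_conv1 (ψ := fun p => ψ (p.1, p.2 - ι p.1)) hκ (by fun_prop) (fun p => hC _) hgs hg hconv

lemma fi_shear_int {E Z : Type*} [TopologicalSpace E] [AddCommGroup E] [IsTopologicalAddGroup E]
    [MeasureSpace E] [BorelSpace E] [SecondCountableTopology E]
    [TopologicalSpace Z] [MeasureSpace Z] [BorelSpace Z] [SecondCountableTopology Z]
    [SFinite (volume : Measure E)] [SFinite (volume : Measure Z)]
    [(volume : Measure E).IsAddRightInvariant] {ι : Z → E} (hι : Continuous ι)
    {κ : Z → ℝ} (hκ : Integrable κ) {g : E → ℝ} (hg : Integrable g) :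
    Integrable (fun p : Z × E => κ p.1 * g (p.2 + ι p.1)) :=
  ((fiShear_mp hι).integrable_comp (hκ.mul_prod hg).1).2 (hκ.mul_prod hg)

/-- pointwise dual inequality -/
lemma fi_dual {A B l : ℝ} (hA : 0 ≤ A) (hB : 0 ≤ B) (hl : 0 < l) :
    (1 - l) * A + (1 - l⁻¹) * B ≤ (√A - √B) ^ 2 := by
  obtain ⟨p, hp, rfl⟩ : ∃ p, 0 ≤ p ∧ A = p ^ 2 := ⟨√A, Real.sqrt_nonneg _, (Real.sq_sqrt hA).symm⟩
  obtain ⟨q, hq, rfl⟩ : ∃ q, 0 ≤ q ∧ B = q ^ 2 := ⟨√B, Real.sqrt_nonneg _, (Real.sq_sqrt hB).symm⟩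
  rw [Real.sqrt_sq hp, Real.sqrt_sq hq]
  have : (p - q) ^ 2 - ((1 - l) * p ^ 2 + (1 - l⁻¹) * q ^ 2) = (l * p - q) ^ 2 / l := by
    field_simp; ring
  have h2 : 0 ≤ (l * p - q) ^ 2 / l := by positivity
  linarith

/-- near-optimal dual variable -/
lemma fi_opt {A B δ : ℝ} (hA : 0 ≤ A) (hB : 0 ≤ B) (hδ : 0 < δ) (hδ1 : δ < 1) :
    (1 - δ) * (√A - √B) ^ 2 ≤
      (1 - max δ ((√B + δ * √A) / (√A + δ * √B))) * A
        + (1 - (max δ ((√B + δ * √A) / (√A + δ * √B)))⁻¹) * B := by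
  obtain ⟨p, hp, rfl⟩ : ∃ p, 0 ≤ p ∧ A = p ^ 2 := ⟨√A, Real.sqrt_nonneg _, (Real.sq_sqrt hA).symm⟩
  obtain ⟨q, hq, rfl⟩ : ∃ q, 0 ≤ q ∧ B = q ^ 2 := ⟨√B, Real.sqrt_nonneg _, (Real.sq_sqrt hB).symm⟩
  rw [Real.sqrt_sq hp, Real.sqrt_sq hq]
  by_cases h0 : p = 0 ∧ q = 0
  · simp [h0.1, h0.2]
  have hd1 : 0 < p + δ * q := by
    rcases hp.lt_or_eq with h | h
    · positivity
    · have : 0 < q := lt_of_le_of_ne hq (fun h' => h0 ⟨h.symm, h'.symm⟩)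
      positivity
  have hd2 : 0 < q + δ * p := by
    rcases hq.lt_or_eq with h | h
    · positivity
    · have : 0 < p := lt_of_le_of_ne hp (fun h' => h0 ⟨h'.symm, h.symm⟩)
      positivity
  have hm : δ ≤ (q + δ * p) / (p + δ * q) := by
    rw [le_div_iff₀ hd1]; nlinarith [mul_nonneg hq (by nlinarith : 0 ≤ 1 - δ ^ 2)]
  rw [max_eq_right hm, inv_div]
  have : (1 - (q + δ * p) / (p + δ * q)) * p ^ 2 + (1 - (p + δ * q) / (q + δ * p)) * q ^ 2
      - (1 - δ) * (p - q) ^ 2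
      = (1 - δ) * (p - q) ^ 2 * (δ * (1 - δ) * (p * q)) / ((p + δ * q) * (q + δ * p)) := by
    have e1 := hd1.ne'
    have e2 := hd2.ne'
    rw [eq_div_iff (mul_ne_zero e1 e2), one_sub_div e1, one_sub_div e2]
    rw [div_mul_eq_mul_div, div_mul_eq_mul_div, div_add_div _ _ e1 e2, sub_mul,
      div_mul_cancel₀ _ (mul_ne_zero e1 e2)]
    ring
  have h2 : 0 ≤ (1 - δ) * (p - q) ^ 2 * (δ * (1 - δ) * (p * q)) / ((p + δ * q) * (q + δ * p)) := by
    have : 0 < 1 - δ := by linarith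
    positivity
  linarith

lemma fi_ratio_le {p q δ : ℝ} (hp : 0 ≤ p) (hq : 0 ≤ q) (hδ : 0 < δ) (hδ1 : δ < 1) :
    max δ ((q + δ * p) / (p + δ * q)) ≤ δ⁻¹ := by
  refine max_le (hδ1.le.trans (one_le_inv_iff₀.2 ⟨hδ, hδ1.le⟩)) ?_
  have h : 0 ≤ p + δ * q := by positivity
  refine div_le_of_le_mul₀ h (by positivity) ?_
  have : δ⁻¹ * (p + δ * q) = δ⁻¹ * p + q := by field_simp
  rw [this]
  have : δ * p ≤ δ⁻¹ * p := mul_le_mul_of_nonneg_right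
    (hδ1.le.trans (one_le_inv_iff₀.2 ⟨hδ, hδ1.le⟩)) hp
  linarith

lemma fi_bd {l δ : ℝ} (hδ : 0 < δ) (h1 : δ ≤ l) (h2 : l ≤ δ⁻¹) :
    |1 - l| ≤ 1 + δ⁻¹ ∧ |1 - l⁻¹| ≤ 1 + δ⁻¹ := by
  have hl : 0 < l := hδ.trans_le h1
  have h3 : l⁻¹ ≤ δ⁻¹ := inv_anti₀ hδ h1
  have h4 : 0 < l⁻¹ := inv_pos.2 hl
  constructor <;> rw [abs_le] <;> constructor <;> linarith

lemma fi_lsc_kernel {E Z : Type*} [TopologicalSpace E] [TopologicalSpace.PseudoMetrizableSpace E]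
    [AddCommGroup E] [IsTopologicalAddGroup E]
    [MeasureSpace E] [BorelSpace E] [SecondCountableTopology E]
    [TopologicalSpace Z] [TopologicalSpace.PseudoMetrizableSpace Z]
    [MeasureSpace Z] [BorelSpace Z] [SecondCountableTopology Z]
    [SFinite (volume : Measure E)] [SFinite (volume : Measure Z)]
    [(volume : Measure E).IsAddRightInvariant] {ι : Z → E} (hι : Continuous ι)
    {κ : Z → ℝ} (hκ : Integrable κ) (hκm : Measurable κ) (hκ0 : ∀ z, 0 ≤ κ z)
    {gs : ℕ → E → ℝ} {g : E → ℝ} (hgs : ∀ n, Integrable (gs n)) (hg : Integrable g)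
    (hgm : Measurable g)
    (hgs0 : ∀ n V, 0 ≤ gs n V) (hg0 : ∀ V, 0 ≤ g V)
    (hconv : ∀ φ : BoundedContinuousFunction E ℝ,
      Tendsto (fun n => ∫ V, φ V * gs n V) atTop (𝓝 (∫ V, φ V * g V))) :
    ∫⁻ p : Z × E, ENNReal.ofReal (κ p.1 * (√(g p.2) - √(g (p.2 + ι p.1))) ^ 2) ≤
    liminf (fun n => ∫⁻ p : Z × E,
      ENNReal.ofReal (κ p.1 * (√(gs n p.2) - √(gs n (p.2 + ι p.1))) ^ 2)) atTop := by
  set L := liminf (fun n => ∫⁻ p : Z × E,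
      ENNReal.ofReal (κ p.1 * (√(gs n p.2) - √(gs n (p.2 + ι p.1))) ^ 2)) atTop with hL
  have hint1 : ∀ {h : E → ℝ}, Integrable h → ∀ {ψ : Z × E → ℝ} {C : ℝ}, Measurable ψ →
      (∀ p, |ψ p| ≤ C) → Integrable (fun p : Z × E => ψ p * (κ p.1 * h p.2)) := by
    intro h hh ψ C hψ hC
    exact (hκ.mul_prod hh).bdd_mul (c := C) hψ.aestronglyMeasurable (by
      filter_upwards with p using hC p)
  have hint2 : ∀ {h : E → ℝ}, Integrable h → ∀ {ψ : Z × E → ℝ} {C : ℝ}, Measurable ψ →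
      (∀ p, |ψ p| ≤ C) → Integrable (fun p : Z × E => ψ p * (κ p.1 * h (p.2 + ι p.1))) := by
    intro h hh ψ C hψ hC
    exact (fi_shear_int hι hκ hh).bdd_mul (c := C) hψ.aestronglyMeasurable (by
      filter_upwards with p using hC p)
  -- continuous test functions
  have step1 : ∀ {δ : ℝ}, 0 < δ → ∀ l : Z × E → ℝ, Continuous l → (∀ p, δ ≤ l p) →
      (∀ p, l p ≤ δ⁻¹) →
      ENNReal.ofReal (∫ p : Z × E, ((1 - l p) * (κ p.1 * g p.2)
        + (1 - (l p)⁻¹) * (κ p.1 * g (p.2 + ι p.1)))) ≤ L := by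
    intro δ hδ l hl h1 h2
    have hne : ∀ p, l p ≠ 0 := fun p => (hδ.trans_le (h1 p)).ne'
    have hc1 : Continuous fun p => 1 - l p := by fun_prop
    have hc2 : Continuous fun p => 1 - (l p)⁻¹ := by fun_prop (disch := assumption)
    have b1 : ∀ p, |1 - l p| ≤ 1 + δ⁻¹ := fun p => (fi_bd hδ (h1 p) (h2 p)).1
    have b2 : ∀ p, |1 - (l p)⁻¹| ≤ 1 + δ⁻¹ := fun p => (fi_bd hδ (h1 p) (h2 p)).2
    have ht := (fi_conv1 hκ hc1 b1 hgs hg hconv).add (fi_conv2 hι hκ hc2 b2 hgs hg hconv)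
    rw [← integral_add (hint1 hg hc1.measurable b1) (hint2 hg hc2.measurable b2)] at ht
    simp_rw [fun n => (integral_add (hint1 (hgs n) hc1.measurable b1)
      (hint2 (hgs n) hc2.measurable b2)).symm] at ht
    have ht2 := (ENNReal.tendsto_ofReal ht).liminf_eq
    rw [← ht2, hL]
    refine liminf_le_liminf (Eventually.of_forall fun n => ?_)
    have hin := (hint1 (hgs n) hc1.measurable b1).add (hint2 (hgs n) hc2.measurable b2)
    calc ENNReal.ofReal (∫ p : Z × E, ((1 - l p) * (κ p.1 * gs n p.2)
        + (1 - (l p)⁻¹) * (κ p.1 * gs n (p.2 + ι p.1))))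
        ≤ ENNReal.ofReal (∫ p : Z × E, max ((1 - l p) * (κ p.1 * gs n p.2)
        + (1 - (l p)⁻¹) * (κ p.1 * gs n (p.2 + ι p.1))) 0) := by
          apply ENNReal.ofReal_le_ofReal
          refine integral_mono hin hin.pos_part fun p => le_max_left _ _
      _ = ∫⁻ p : Z × E, ENNReal.ofReal (max ((1 - l p) * (κ p.1 * gs n p.2)
        + (1 - (l p)⁻¹) * (κ p.1 * gs n (p.2 + ι p.1))) 0) :=
          ofReal_integral_eq_lintegral_ofReal hin.pos_part
            (Eventually.of_forall fun p => le_max_right _ _)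
      _ ≤ _ := by
          refine lintegral_mono fun p => ENNReal.ofReal_le_ofReal ?_
          refine max_le ?_ (mul_nonneg (hκ0 _) (sq_nonneg _))
          have := fi_dual (hgs0 n p.2) (hgs0 n (p.2 + ι p.1)) (hδ.trans_le (h1 p))
          have := mul_le_mul_of_nonneg_left this (hκ0 p.1)
          linarith
  -- measurable test functions
  have step2 : ∀ {δ : ℝ}, 0 < δ → δ < 1 → ∀ l : Z × E → ℝ, Measurable l → (∀ p, δ ≤ l p) →
      (∀ p, l p ≤ δ⁻¹) →
      ENNReal.ofReal (∫ p : Z × E, ((1 - l p) * (κ p.1 * g p.2)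
        + (1 - (l p)⁻¹) * (κ p.1 * g (p.2 + ι p.1)))) ≤ L := by
    intro δ hδ hδ1 l hl h1 h2
    refine ENNReal.le_of_forall_pos_le_add fun η hη _ => ?_
    have hwi : Integrable (fun p : Z × E => κ p.1 * g p.2 + κ p.1 * g (p.2 + ι p.1)) :=
      (hκ.mul_prod hg).add (fi_shear_int hι hκ hg)
    have hιm : Measurable ι := hι.measurable
    have hadd : Measurable fun p : Z × E => p.2 + ι p.1 :=
      (by fun_prop : Continuous fun p : Z × E => p.2 + ι p.1).measurable
    have hwm : Measurable (fun p : Z × E => κ p.1 * g p.2 + κ p.1 * g (p.2 + ι p.1)) :=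
      ((hκm.comp measurable_fst).mul (hgm.comp measurable_snd)).add
        ((hκm.comp measurable_fst).mul (hgm.comp hadd))
    set w := (fun p : Z × E => κ p.1 * g p.2 + κ p.1 * g (p.2 + ι p.1)) with hw
    have hw0 : ∀ p, 0 ≤ w p := fun p => add_nonneg (mul_nonneg (hκ0 _) (hg0 _))
      (mul_nonneg (hκ0 _) (hg0 _))
    have : IsFiniteMeasure ((volume : Measure (Z × E)).withDensity
      fun p => ENNReal.ofReal (w p)) := isFiniteMeasure_withDensity_ofReal hwi.2
    have hlint : Integrable l ((volume : Measure (Z × E)).withDensity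
        fun p => ENNReal.ofReal (w p)) := by
      refine Integrable.of_bound hl.aestronglyMeasurable δ⁻¹ (Eventually.of_forall fun p => ?_)
      rw [Real.norm_eq_abs, abs_of_nonneg (hδ.le.trans (h1 p))]
      exact h2 p
    have hη' : (0 : ℝ) < δ ^ 2 * η := by positivity
    let _ := TopologicalSpace.pseudoMetrizableSpacePseudoMetric E
    let _ := TopologicalSpace.pseudoMetrizableSpacePseudoMetric Z
    obtain ⟨lc, hlc, hlci⟩ := hlint.exists_boundedContinuous_integral_sub_le hη'
    have hmo : Measurable fun p => ENNReal.ofReal (w p) := hwm.ennreal_ofReal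
    have hfin : ∀ᵐ p : Z × E, ENNReal.ofReal (w p) < ∞ :=
      Eventually.of_forall fun p => ENNReal.ofReal_lt_top
    rw [integral_withDensity_eq_integral_toReal_smul hmo hfin] at hlc
    have hdi := (integrable_withDensity_iff_integrable_smul' hmo hfin).1 (hlint.sub hlci).norm
    simp only [ENNReal.toReal_ofReal (hw0 _), smul_eq_mul, Pi.sub_apply, Real.norm_eq_abs]
      at hlc hdi
    have hδ' : δ ≤ δ⁻¹ := hδ1.le.trans (one_le_inv_iff₀.2 ⟨hδ, hδ1.le⟩)
    set m : Z × E → ℝ := fun p => max δ (min δ⁻¹ (lc p)) with hm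
    have hmc : Continuous m := by
      have := lc.continuous
      fun_prop
    have m1 : ∀ p, δ ≤ m p := fun p => le_max_left _ _
    have m2 : ∀ p, m p ≤ δ⁻¹ := fun p => max_le hδ' (min_le_left _ _)
    have hml : ∀ p, |m p - l p| ≤ |l p - lc p| := by
      intro p
      have e : l p = max δ (min δ⁻¹ (l p)) := by
        rw [min_eq_right (h2 p), max_eq_right (h1 p)]
      calc |m p - l p| = |max δ (min δ⁻¹ (lc p)) - max δ (min δ⁻¹ (l p))| := by rw [← e]
        _ ≤ |min δ⁻¹ (lc p) - min δ⁻¹ (l p)| := (abs_max_sub_max_le_max _ _ _ _).trans (by simp)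
        _ ≤ |lc p - l p| := by
          refine (abs_min_sub_min_le_max _ _ _ _).trans ?_
          simp
        _ = _ := abs_sub_comm _ _
    have hone : 1 ≤ (δ ^ 2)⁻¹ := one_le_inv_iff₀.2 ⟨by positivity, by nlinarith⟩
    have key : ∫ p : Z × E, ((1 - l p) * (κ p.1 * g p.2)
        + (1 - (l p)⁻¹) * (κ p.1 * g (p.2 + ι p.1))) ≤
        (∫ p : Z × E, ((1 - m p) * (κ p.1 * g p.2)
        + (1 - (m p)⁻¹) * (κ p.1 * g (p.2 + ι p.1)))) + η := by
      have i1 := (hint1 hg (hl.const_sub 1) (fun p => (fi_bd hδ (h1 p) (h2 p)).1)).add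
        (hint2 hg (hl.inv.const_sub 1) (fun p => (fi_bd hδ (h1 p) (h2 p)).2))
      have i2 := (hint1 hg (hmc.measurable.const_sub 1) (fun p => (fi_bd hδ (m1 p) (m2 p)).1)).add
        (hint2 hg (hmc.measurable.inv.const_sub 1) (fun p => (fi_bd hδ (m1 p) (m2 p)).2))
      have i3 := hdi.const_mul (δ ^ 2)⁻¹
      calc _ ≤ ∫ p : Z × E, (((1 - m p) * (κ p.1 * g p.2)
            + (1 - (m p)⁻¹) * (κ p.1 * g (p.2 + ι p.1)))
            + (δ ^ 2)⁻¹ * (w p * |l p - lc p|)) := by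
            refine integral_mono i1 (i2.add i3) fun p => ?_
            dsimp only [Pi.add_apply, Pi.inv_apply]
            have hA : 0 ≤ κ p.1 * g p.2 := mul_nonneg (hκ0 _) (hg0 _)
            have hB : 0 ≤ κ p.1 * g (p.2 + ι p.1) := mul_nonneg (hκ0 _) (hg0 _)
            have lpos := hδ.trans_le (h1 p)
            have mpos := hδ.trans_le (m1 p)
            have d1 : m p - l p ≤ (δ ^ 2)⁻¹ * |l p - lc p| := by
              have := (le_abs_self _).trans (hml p)
              have := mul_le_mul_of_nonneg_right hone (abs_nonneg (l p - lc p))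
              linarith
            have d2 : (m p)⁻¹ - (l p)⁻¹ ≤ (δ ^ 2)⁻¹ * |l p - lc p| := by
              have e : (m p)⁻¹ - (l p)⁻¹ = (l p * m p)⁻¹ * (l p - m p) := by
                field_simp
              rw [e]
              have a1 : (l p * m p)⁻¹ ≤ (δ ^ 2)⁻¹ := by
                apply inv_anti₀ (by positivity)
                rw [sq]; exact mul_le_mul (h1 p) (m1 p) hδ.le lpos.le
              have a2 : l p - m p ≤ |l p - lc p| :=
                (le_abs_self _).trans (by rw [abs_sub_comm]; exact hml p)
              calc (l p * m p)⁻¹ * (l p - m p) ≤ (l p * m p)⁻¹ * |l p - lc p| :=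
                    mul_le_mul_of_nonneg_left a2 (by positivity)
                _ ≤ _ := mul_le_mul_of_nonneg_right a1 (abs_nonneg _)
            have f1 := mul_le_mul_of_nonneg_right d1 hA
            have f2 := mul_le_mul_of_nonneg_right d2 hB
            simp only [hw]
            linarith
        _ = (∫ p : Z × E, ((1 - m p) * (κ p.1 * g p.2)
            + (1 - (m p)⁻¹) * (κ p.1 * g (p.2 + ι p.1))))
            + (δ ^ 2)⁻¹ * ∫ p : Z × E, (w p * |l p - lc p|) := by
            rw [← integral_const_mul]
            exact integral_add i2 i3
        _ ≤ _ := by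
            have : (δ ^ 2)⁻¹ * ∫ p : Z × E, (w p * |l p - lc p|) ≤ (δ ^ 2)⁻¹ * (δ ^ 2 * η) :=
              mul_le_mul_of_nonneg_left hlc (by positivity)
            rw [inv_mul_cancel_left₀ (by positivity)] at this
            linarith
    calc _ ≤ _ := ENNReal.ofReal_le_ofReal key
      _ ≤ _ := ENNReal.ofReal_add_le
      _ ≤ _ := by
        rw [ENNReal.ofReal_coe_nnreal]
        gcongr
        exact step1 hδ m hmc m1 m2
  -- conclusion
  refine ENNReal.le_of_forall_lt_one_mul_le fun a ha => ?_
  have ha1 : a ≠ ∞ := (ha.trans ENNReal.one_lt_top).ne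
  rcases eq_or_ne a 0 with rfl | ha0
  · simp
  have hr0 : 0 < a.toReal := ENNReal.toReal_pos ha0 ha1
  have hr1 : a.toReal < 1 := by
    rw [← ENNReal.toReal_one]; exact (ENNReal.toReal_lt_toReal ha1 ENNReal.one_ne_top).2 ha
  set δ := 1 - a.toReal with hδd
  have hδ : 0 < δ := by linarith
  have hδ1 : δ < 1 := by linarith
  have hadd : Measurable fun p : Z × E => p.2 + ι p.1 :=
    (by fun_prop : Continuous fun p : Z × E => p.2 + ι p.1).measurable
  have hp : Measurable fun p : Z × E => √(g p.2) := (hgm.comp measurable_snd).sqrt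
  have hq : Measurable fun p : Z × E => √(g (p.2 + ι p.1)) := (hgm.comp hadd).sqrt
  set l : Z × E → ℝ := fun p => max δ ((√(g (p.2 + ι p.1)) + δ * √(g p.2))
    / (√(g p.2) + δ * √(g (p.2 + ι p.1)))) with hl
  have hlm : Measurable l := measurable_const.max
    ((hq.add (hp.const_mul δ)).div (hp.add (hq.const_mul δ)))
  have l1 : ∀ p, δ ≤ l p := fun p => le_max_left _ _
  have l2 : ∀ p, l p ≤ δ⁻¹ := fun p =>
    fi_ratio_le (Real.sqrt_nonneg _) (Real.sqrt_nonneg _) hδ hδ1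
  have hpt : ∀ p : Z × E, a.toReal * (κ p.1 * (√(g p.2) - √(g (p.2 + ι p.1))) ^ 2) ≤
      (1 - l p) * (κ p.1 * g p.2) + (1 - (l p)⁻¹) * (κ p.1 * g (p.2 + ι p.1)) := by
    intro p
    have := mul_le_mul_of_nonneg_left
      (fi_opt (hg0 p.2) (hg0 (p.2 + ι p.1)) hδ hδ1) (hκ0 p.1)
    have e : a.toReal = 1 - δ := by linarith
    rw [e]
    simp only [hl]
    linarith
  refine le_trans ?_ (step2 hδ hδ1 l hlm l1 l2)
  have i1 := (hint1 hg (hlm.const_sub 1) (fun p => (fi_bd hδ (l1 p) (l2 p)).1)).add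
        (hint2 hg (hlm.inv.const_sub 1) (fun p => (fi_bd hδ (l1 p) (l2 p)).2))
  rw [← lintegral_const_mul' _ _ ha1]
  have := ofReal_integral_eq_lintegral_ofReal i1 (Eventually.of_forall fun p =>
    (mul_nonneg hr0.le (mul_nonneg (hκ0 _) (sq_nonneg _))).trans (hpt p))
  simp only [Pi.add_apply, Pi.inv_apply] at this
  rw [this]
  refine lintegral_mono fun p => ?_
  conv_lhs => rw [← ENNReal.ofReal_toReal ha1]
  rw [← ENNReal.ofReal_mul hr0.le]
  exact ENNReal.ofReal_le_ofReal (hpt p)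

end LSC

section FI
open Filter Topology

lemma jap_pos {d : ℕ} (x : Euc d) : 0 < jap x := Real.sqrt_pos.2 (by positivity)

lemma one_le_jap {d : ℕ} (x : Euc d) : 1 ≤ jap x := by
  unfold jap
  rw [Real.one_le_sqrt]
  nlinarith [sq_nonneg ‖x‖]

lemma jap_cont {d : ℕ} : Continuous (jap : Euc d → ℝ) := by
  unfold jap; fun_prop

lemma jap_rpow_cont {d : ℕ} (γ : ℝ) : Continuous (fun x : Euc d => jap x ^ γ) :=
  jap_cont.rpow_const fun x => Or.inl (jap_pos x).ne'

lemma jap_sqrt {d : ℕ} (γ : ℝ) (x : Euc d) (a : ℝ) :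
    √(jap x ^ γ * a) = jap x ^ (γ / 2) * √a := by
  rw [Real.sqrt_mul (Real.rpow_nonneg (jap_pos x).le _)]
  congr 1
  rw [show γ = γ / 2 + γ / 2 by ring, Real.rpow_add (jap_pos x),
    Real.sqrt_mul_self (Real.rpow_nonneg (jap_pos x).le _)]
  congr 1
  ring

lemma update_eq_add_single {d N : ℕ} (V : Fin N → Euc d) (i : Fin N) (z : Euc d) :
    Function.update V i (z + V i) = V + Pi.single i z := by
  ext1 j
  rcases eq_or_ne j i with rfl | h
  · simp [add_comm]
  · simp [h]

lemma fi_meas {d N : ℕ} (ν γ : ℝ) (i : Fin N) {G : (Fin N → Euc d) → ℝ} (hG : Measurable G) :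
    Measurable (fun p : (Fin N → Euc d) × Euc d =>
      ENNReal.ofReal ((jap (p.1 i) ^ (γ/2) * Real.sqrt (G p.1)
      - jap p.2 ^ (γ/2) * Real.sqrt (G (Function.update p.1 i p.2)))^2
      / ‖p.1 i - p.2‖ ^ ((d : ℝ) + ν))) := by
  have hj := (jap_rpow_cont (d := d) (γ/2)).measurable
  have hu : Measurable fun p : (Fin N → Euc d) × Euc d => Function.update p.1 i p.2 :=
    (by fun_prop : Continuous fun p : (Fin N → Euc d) × Euc d =>
      Function.update p.1 i p.2).measurable
  have h1 : Measurable fun p : (Fin N → Euc d) × Euc d => p.1 i :=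
    (measurable_pi_apply i).comp measurable_fst
  refine Measurable.ennreal_ofReal (Measurable.div (Measurable.pow_const (Measurable.sub ?_ ?_) 2)
    (Measurable.pow_const (h1.sub measurable_snd).norm _))
  · exact (hj.comp h1).mul (hG.comp measurable_fst).sqrt
  · exact (hj.comp measurable_snd).mul (hG.comp hu).sqrt

lemma fi_term_meas {d N : ℕ} (i : Fin N) {g : (Fin N → Euc d) → ℝ} (hg : Measurable g)
    {κ : Euc d → ℝ} (hκ : Measurable κ) :
    Measurable (fun p : Euc d × (Fin N → Euc d) =>
      ENNReal.ofReal (κ p.1 * (√(g p.2) - √(g (p.2 + Pi.single i p.1))) ^ 2)) := by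
  have hu : Measurable fun p : Euc d × (Fin N → Euc d) => p.2 + Pi.single i p.1 := by
    have : Continuous (fun z : Euc d => (Pi.single i z : Fin N → Euc d)) :=
    continuous_single (A := fun _ : Fin N => Euc d) i
    exact (by fun_prop : Continuous fun p : Euc d × (Fin N → Euc d) =>
      p.2 + Pi.single i p.1).measurable
  exact ((hκ.comp measurable_fst).mul
    (((hg.comp measurable_snd).sqrt.sub (hg.comp hu).sqrt).pow_const 2)).ennreal_ofReal

lemma fi_term_eq {d N : ℕ} (ν γ : ℝ) (i : Fin N) {G : (Fin N → Euc d) → ℝ} (hG : Measurable G) :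
    (∫⁻ V : Fin N → Euc d, ∫⁻ w : Euc d,
      ENNReal.ofReal ((jap (V i) ^ (γ/2) * Real.sqrt (G V)
      - jap w ^ (γ/2) * Real.sqrt (G (Function.update V i w)))^2
      / ‖V i - w‖ ^ ((d : ℝ) + ν))) =
    ∫⁻ p : Euc d × (Fin N → Euc d), ENNReal.ofReal ((‖p.1‖ ^ ((d : ℝ) + ν))⁻¹ *
      (√((fun V : Fin N → Euc d => jap (V i) ^ γ * G V) p.2)
      - √((fun V : Fin N → Euc d => jap (V i) ^ γ * G V) (p.2 + Pi.single i p.1))) ^ 2) := by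
  have hg : Measurable (fun V : Fin N → Euc d => jap (V i) ^ γ * G V) :=
    ((jap_rpow_cont γ).measurable.comp (measurable_pi_apply i)).mul hG
  have hκ : Measurable fun z : Euc d => (‖z‖ ^ ((d : ℝ) + ν))⁻¹ :=
    (measurable_norm.pow_const _).inv
  rw [show (volume : Measure (Euc d × (Fin N → Euc d))) =
    (volume : Measure (Euc d)).prod volume from rfl,
    lintegral_prod_symm' _ (fi_term_meas i hg hκ)]
  refine lintegral_congr fun V => ?_
  rw [← lintegral_add_right_eq_self _ (V i)]
  refine lintegral_congr fun z => ?_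
  rw [update_eq_add_single]
  simp only [jap_sqrt]
  congr 1
  rw [show V i - (z + V i) = -z by abel, norm_neg, div_eq_inv_mul]
  simp [add_comm]

/-- Regularised kernel. -/
def fiKer (d : ℕ) (r : ℝ) (k : ℕ) (z : Euc d) : ℝ := (1 / ((k : ℝ) + 1) + ‖z‖) ^ (-r)

lemma fiKer_nonneg (d : ℕ) (r : ℝ) (k : ℕ) (z : Euc d) : 0 ≤ fiKer d r k z := by
  unfold fiKer; positivity

lemma fiKer_meas (d : ℕ) (r : ℝ) (k : ℕ) : Measurable (fiKer d r k) := by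
  unfold fiKer; fun_prop

lemma fiKer_int (d : ℕ) {r : ℝ} (hr : (d : ℝ) < r) (k : ℕ) : Integrable (fiKer d r k) := by
  have hk : (0 : ℝ) < (k : ℝ) + 1 := by positivity
  have h0 : Integrable (fun z : Euc d => (1 + ‖z‖) ^ (-r)) :=
    integrable_one_add_norm (by simpa using hr)
  have h := (h0.comp_smul hk.ne').const_mul ((1 / ((k : ℝ) + 1)) ^ (-r))
  refine h.congr (Eventually.of_forall fun z => ?_)
  simp only [fiKer]
  rw [← Real.mul_rpow (by positivity) (by positivity), norm_smul, Real.norm_eq_abs, abs_of_pos hk]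
  congr 1
  field_simp

lemma fiKer_le (d : ℕ) {r : ℝ} (hr : 0 < r) (k : ℕ) (z : Euc d) (hz : z ≠ 0) :
    fiKer d r k z ≤ (‖z‖ ^ r)⁻¹ := by
  rw [← Real.rpow_neg (norm_nonneg _)]
  have : (0 : ℝ) ≤ 1 / ((k : ℝ) + 1) := by positivity
  exact Real.rpow_le_rpow_of_nonpos (norm_pos_iff.2 hz) (by linarith) (by linarith)

lemma fiKer_tendsto (d : ℕ) {r : ℝ} (z : Euc d) (hz : z ≠ 0) :
    Tendsto (fun k => fiKer d r k z) atTop (𝓝 (‖z‖ ^ r)⁻¹) := by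
  rw [← Real.rpow_neg (norm_nonneg _)]
  have h : Tendsto (fun k : ℕ => 1 / ((k : ℝ) + 1) + ‖z‖) atTop (𝓝 (0 + ‖z‖)) :=
    tendsto_one_div_add_atTop_nhds_zero_nat.add tendsto_const_nhds
  rw [zero_add] at h
  exact h.rpow_const (Or.inl (norm_ne_zero_iff.2 hz))

lemma prob_integrable {α : Type*} [MeasureSpace α] {f : α → ℝ} (hf : IsProbDensity f) :
    Integrable f := by
  refine ⟨hf.1.aestronglyMeasurable, ?_⟩
  rw [hasFiniteIntegral_iff_ofReal (Eventually.of_forall hf.2.1), hf.2.2]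
  exact ENNReal.one_lt_top

set_option maxHeartbeats 200000 in
lemma fi_lsc_term {d N : ℕ} {ν γ : ℝ} (hν : 0 < ν) (hγ : γ ≤ 0) (i : Fin N)
    {Gs : ℕ → (Fin N → Euc d) → ℝ} {G : (Fin N → Euc d) → ℝ}
    (hGs : ∀ n, IsProbDensity (Gs n)) (hG : IsProbDensity G)
    (hconv : ∀ φ : BoundedContinuousFunction (Fin N → Euc d) ℝ,
          Filter.Tendsto (fun n => ∫ V, φ V * Gs n V) Filter.atTop
            (nhds (∫ V, φ V * G V))) :
    (∫⁻ V : Fin N → Euc d, ∫⁻ w : Euc d,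
      ENNReal.ofReal ((jap (V i) ^ (γ/2) * Real.sqrt (G V)
      - jap w ^ (γ/2) * Real.sqrt (G (Function.update V i w)))^2
      / ‖V i - w‖ ^ ((d : ℝ) + ν))) ≤
    liminf (fun n => ∫⁻ V : Fin N → Euc d, ∫⁻ w : Euc d,
      ENNReal.ofReal ((jap (V i) ^ (γ/2) * Real.sqrt (Gs n V)
      - jap w ^ (γ/2) * Real.sqrt (Gs n (Function.update V i w)))^2
      / ‖V i - w‖ ^ ((d : ℝ) + ν))) atTop := by
  have hr : (d : ℝ) < d + ν := by linarith
  have hr0 : (0 : ℝ) < d + ν := by positivity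
  have hac : Continuous fun V : Fin N → Euc d => jap (V i) ^ γ :=
    (jap_rpow_cont γ).comp (continuous_apply i)
  have ha0 : ∀ V : Fin N → Euc d, 0 ≤ jap (V i) ^ γ := fun V => Real.rpow_nonneg (jap_pos _).le _
  have ha1 : ∀ V : Fin N → Euc d, ‖jap (V i) ^ γ‖ ≤ 1 := fun V => by
    rw [Real.norm_eq_abs, abs_of_nonneg (ha0 V)]
    exact Real.rpow_le_one_of_one_le_of_nonpos (one_le_jap _) hγ
  have hint : ∀ {H : (Fin N → Euc d) → ℝ}, IsProbDensity H →
      Integrable (fun V : Fin N → Euc d => jap (V i) ^ γ * H V) := fun hH =>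
    (prob_integrable hH).bdd_mul (c := 1) hac.measurable.aestronglyMeasurable
      (Eventually.of_forall ha1)
  have hmeas : ∀ {H : (Fin N → Euc d) → ℝ}, IsProbDensity H →
      Measurable (fun V : Fin N → Euc d => jap (V i) ^ γ * H V) := fun hH =>
    hac.measurable.mul hH.1
  simp_rw [fun n => fi_term_eq ν γ i (hGs n).1]
  rw [fi_term_eq ν γ i hG.1]
  set g := fun V : Fin N → Euc d => jap (V i) ^ γ * G V with hg
  set gs := fun n => fun V : Fin N → Euc d => jap (V i) ^ γ * Gs n V with hgs
  have hsing : Continuous (fun z : Euc d => (Pi.single i z : Fin N → Euc d)) :=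
    continuous_single (A := fun _ : Fin N => Euc d) i
  have hconv' : ∀ φ : BoundedContinuousFunction (Fin N → Euc d) ℝ,
      Tendsto (fun n => ∫ V, φ V * gs n V) atTop (𝓝 (∫ V, φ V * g V)) := by
    intro φ
    have := hconv (φ * BoundedContinuousFunction.ofNormedAddCommGroup _ hac 1 ha1)
    simpa [hg, hgs, mul_assoc] using this
  have hle : ∀ (h : (Fin N → Euc d) → ℝ) (k : ℕ) (p : Euc d × (Fin N → Euc d)),
      fiKer d (d + ν) k p.1 * (√(h p.2) - √(h (p.2 + Pi.single i p.1))) ^ 2 ≤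
      (‖p.1‖ ^ ((d : ℝ) + ν))⁻¹ * (√(h p.2) - √(h (p.2 + Pi.single i p.1))) ^ 2 := by
    intro h k p
    by_cases hz : p.1 = 0
    · simp [hz]
    · exact mul_le_mul_of_nonneg_right (fiKer_le d hr0 k p.1 hz) (sq_nonneg _)
  calc _ = ∫⁻ p : Euc d × (Fin N → Euc d), liminf (fun k : ℕ =>
        ENNReal.ofReal (fiKer d (d + ν) k p.1 *
          (√(g p.2) - √(g (p.2 + Pi.single i p.1))) ^ 2)) atTop := by
        refine lintegral_congr fun p => ?_
        symm
        refine Tendsto.liminf_eq ?_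
        by_cases hz : p.1 = 0
        · simp [hz]
        · exact ENNReal.tendsto_ofReal ((fiKer_tendsto d p.1 hz).mul_const _)
    _ ≤ liminf (fun k : ℕ => ∫⁻ p : Euc d × (Fin N → Euc d),
        ENNReal.ofReal (fiKer d (d + ν) k p.1 *
          (√(g p.2) - √(g (p.2 + Pi.single i p.1))) ^ 2)) atTop := by
        have hm := fun k => fi_term_meas i (g := g) (hmeas hG) (fiKer_meas d (d + ν) k)
        exact lintegral_liminf_le hm
    _ ≤ liminf (fun _ : ℕ => liminf (fun n => ∫⁻ p : Euc d × (Fin N → Euc d),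
        ENNReal.ofReal ((‖p.1‖ ^ ((d : ℝ) + ν))⁻¹ *
          (√(gs n p.2) - √(gs n (p.2 + Pi.single i p.1))) ^ 2)) atTop) atTop := by
        refine liminf_le_liminf (Eventually.of_forall fun k => ?_)
        refine (fi_lsc_kernel (gs := gs) (g := g) hsing (fiKer_int d hr k) (fiKer_meas d _ k) (fiKer_nonneg d _ k)
          (fun n => hint (hGs n)) (hint hG) (hmeas hG)
          (fun n V => mul_nonneg (ha0 V) ((hGs n).2.1 V))
          (fun V => mul_nonneg (ha0 V) (hG.2.1 V)) hconv').trans ?_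
        refine liminf_le_liminf (Eventually.of_forall fun n => ?_)
        exact lintegral_mono fun p => ENNReal.ofReal_le_ofReal (hle (gs n) k p)
    _ = _ := by simp [hgs]

lemma sum_liminf_le {ι : Type*} [Fintype ι] (u : ι → ℕ → ℝ≥0∞) :
    ∑ i, liminf (u i) atTop ≤ liminf (fun n => ∑ i, u i n) atTop := by
  let _ : MeasurableSpace ι := ⊤
  have := lintegral_liminf_le (μ := (Measure.count : Measure ι)) (f := fun n i => u i n)
    (u := atTop) (fun n => measurable_of_finite _)
  simpa [lintegral_count, tsum_fintype] using this

lemma fi_lsc {d N : ℕ} {ν γ : ℝ} (hν : 0 < ν) (hγ : γ ≤ 0) (hN : 1 ≤ N)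
    {Gs : ℕ → (Fin N → Euc d) → ℝ} {G : (Fin N → Euc d) → ℝ}
    (hGs : ∀ n, IsProbDensity (Gs n)) (hG : IsProbDensity G)
    (hconv : ∀ φ : BoundedContinuousFunction (Fin N → Euc d) ℝ,
          Filter.Tendsto (fun n => ∫ V, φ V * Gs n V) Filter.atTop
            (nhds (∫ V, φ V * G V))) :
    fisherInfo d N ν γ G ≤ Filter.liminf (fun n => fisherInfo d N ν γ (Gs n)) Filter.atTop := by
  unfold fisherInfo
  have hN' : ((N : ℝ≥0∞))⁻¹ ≠ ∞ := by
    simp only [ne_eq, ENNReal.inv_eq_top, Nat.cast_eq_zero]; omega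
  rw [ENNReal.liminf_const_mul_of_ne_top hN']
  gcongr
  refine le_trans ?_ (sum_liminf_le _)
  exact Finset.sum_le_sum fun i _ => fi_lsc_term hν hγ i hGs hG hconv

/-! Convexity -/

lemma fi_convex_pt {a b x y x' y' t : ℝ} (ha : 0 ≤ a) (hb : 0 ≤ b) (hx : 0 ≤ x) (hy : 0 ≤ y)
    (hx' : 0 ≤ x') (hy' : 0 ≤ y') (ht : 0 ≤ t) (ht1 : t ≤ 1) :
    (a * √(t * x + (1 - t) * x') - b * √(t * y + (1 - t) * y')) ^ 2 ≤
      t * (a * √x - b * √y) ^ 2 + (1 - t) * (a * √x' - b * √y') ^ 2 := by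
  have hs : 0 ≤ 1 - t := by linarith
  have e1 := Real.sq_sqrt (show 0 ≤ t * x + (1 - t) * x' by positivity)
  have e2 := Real.sq_sqrt (show 0 ≤ t * y + (1 - t) * y' by positivity)
  have e3 := Real.sq_sqrt hx
  have e4 := Real.sq_sqrt hy
  have e5 := Real.sq_sqrt hx'
  have e6 := Real.sq_sqrt hy'
  have key : t * (√x * √y) + (1 - t) * (√x' * √y') ≤
      √(t * x + (1 - t) * x') * √(t * y + (1 - t) * y') := by
    rw [← Real.sqrt_mul (show 0 ≤ t * x + (1 - t) * x' by positivity)]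
    apply Real.le_sqrt_of_sq_le
    have h := mul_nonneg (mul_nonneg ht hs) (sq_nonneg (√x * √y' - √x' * √y))
    have : (t * x + (1 - t) * x') * (t * y + (1 - t) * y')
        - (t * (√x * √y) + (1 - t) * (√x' * √y')) ^ 2
        = t * (1 - t) * (√x * √y' - √x' * √y) ^ 2 := by
      nth_rewrite 1 [← e3, ← e4, ← e5, ← e6]
      ring
    linarith
  have k2 := mul_le_mul_of_nonneg_left key (mul_nonneg ha hb)
  have x1 : (a * √(t * x + (1 - t) * x') - b * √(t * y + (1 - t) * y')) ^ 2
      = a ^ 2 * (t * x + (1 - t) * x') + b ^ 2 * (t * y + (1 - t) * y')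
        - 2 * (a * b * (√(t * x + (1 - t) * x') * √(t * y + (1 - t) * y'))) := by
    linear_combination a ^ 2 * e1 + b ^ 2 * e2
  have x2 : (a * √x - b * √y) ^ 2 = a ^ 2 * x + b ^ 2 * y - 2 * (a * b * (√x * √y)) := by
    linear_combination a ^ 2 * e3 + b ^ 2 * e4
  have x3 : (a * √x' - b * √y') ^ 2 = a ^ 2 * x' + b ^ 2 * y' - 2 * (a * b * (√x' * √y')) := by
    linear_combination a ^ 2 * e5 + b ^ 2 * e6
  rw [x1, x2, x3]
  linarith

lemma fi_meas_slice {d N : ℕ} (ν γ : ℝ) (i : Fin N) {G : (Fin N → Euc d) → ℝ} (hG : Measurable G)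
    (V : Fin N → Euc d) : Measurable fun w : Euc d =>
      ENNReal.ofReal ((jap (V i) ^ (γ/2) * Real.sqrt (G V)
      - jap w ^ (γ/2) * Real.sqrt (G (Function.update V i w)))^2
      / ‖V i - w‖ ^ ((d : ℝ) + ν)) := by
  have hj := (jap_rpow_cont (d := d) (γ/2)).measurable
  have hu : Measurable fun w : Euc d => Function.update V i w :=
    (by fun_prop : Continuous fun w : Euc d => Function.update V i w).measurable
  refine Measurable.ennreal_ofReal (Measurable.div (Measurable.pow_const (Measurable.sub ?_ ?_) 2)
    (Measurable.pow_const (measurable_id.const_sub _).norm _))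
  · exact measurable_const
  · exact hj.mul (hG.comp hu).sqrt

set_option maxHeartbeats 200000 in
lemma fi_convex {d N : ℕ} {ν γ : ℝ} {G H : (Fin N → Euc d) → ℝ}
    (hG : IsProbDensity G) (hH : IsProbDensity H) {t : ℝ} (ht : t ∈ Set.Icc (0 : ℝ) 1) :
    fisherInfo d N ν γ (fun V => t * G V + (1-t) * H V)
          ≤ ENNReal.ofReal t * fisherInfo d N ν γ G
            + ENNReal.ofReal (1-t) * fisherInfo d N ν γ H := by
  have hs : 0 ≤ 1 - t := by linarith [ht.2]
  unfold fisherInfo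
  rw [mul_left_comm, mul_left_comm (ENNReal.ofReal (1 - t)), ← mul_add]
  gcongr
  rw [Finset.mul_sum, Finset.mul_sum, ← Finset.sum_add_distrib]
  refine Finset.sum_le_sum fun i _ => ?_
  have mG := fi_meas ν γ i hG.1
  have mH := fi_meas ν γ i hH.1
  rw [← lintegral_const_mul' _ _ ENNReal.ofReal_ne_top,
    ← lintegral_const_mul' _ _ ENNReal.ofReal_ne_top,
    ← lintegral_add_left (mG.lintegral_prod_right'.const_mul _)]
  refine lintegral_mono fun V => ?_
  have mGV : Measurable fun w => ENNReal.ofReal ((jap (V i) ^ (γ/2) * Real.sqrt (G V)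
      - jap w ^ (γ/2) * Real.sqrt (G (Function.update V i w)))^2
      / ‖V i - w‖ ^ ((d : ℝ) + ν)) := fi_meas_slice ν γ i hG.1 V
  dsimp only
  rw [← lintegral_const_mul' _ _ ENNReal.ofReal_ne_top,
    ← lintegral_const_mul' _ _ ENNReal.ofReal_ne_top,
    ← lintegral_add_left (mGV.const_mul _)]
  refine lintegral_mono fun w => ?_
  rw [← ENNReal.ofReal_mul ht.1, ← ENNReal.ofReal_mul hs,
    ← ENNReal.ofReal_add (mul_nonneg ht.1 (by positivity)) (mul_nonneg hs (by positivity))]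
  refine ENNReal.ofReal_le_ofReal ?_
  rw [← mul_div_assoc, ← mul_div_assoc, ← add_div]
  refine div_le_div_of_nonneg_right ?_ (by positivity)
  exact fi_convex_pt (Real.rpow_nonneg (jap_pos _).le _) (Real.rpow_nonneg (jap_pos _).le _)
    (hG.2.1 _) (hG.2.1 _) (hH.2.1 _) (hH.2.1 _) ht.1 ht.2

/-! Tensorization -/

lemma lintegral_split {α : Type*} [MeasureSpace α] [SigmaFinite (volume : Measure α)] {n : ℕ}
    (i : Fin (n + 1)) {F : α → ℝ≥0∞} {H : (Fin n → α) → ℝ≥0∞} (hF : Measurable F)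
    (hH : Measurable H) :
    ∫⁻ V : Fin (n + 1) → α, F (V i) * H (fun j => V (i.succAbove j))
      = (∫⁻ x, F x) * ∫⁻ W, H W := by
  have hmp := volume_preserving_piFinSuccAbove (fun _ : Fin (n + 1) => α) i
  rw [← lintegral_prod_mul hF.aemeasurable hH.aemeasurable]
  exact hmp.lintegral_comp (f := fun p : α × (Fin n → α) => F p.1 * H p.2)
    ((hF.comp measurable_fst).mul (hH.comp measurable_snd))

lemma lintegral_tensor {α : Type*} [MeasureSpace α] [SigmaFinite (volume : Measure α)]
    {f : α → ℝ≥0∞} (hf : Measurable f) (h1 : ∫⁻ x, f x = 1) (n : ℕ) :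
    ∫⁻ V : Fin n → α, ∏ j, f (V j) = 1 := by
  induction n with
  | zero =>
    simp [volume_pi]
  | succ n ih =>
    simp_rw [Fin.prod_univ_succ]
    have hH : Measurable fun W : Fin n → α => ∏ j, f (W j) :=
      Finset.measurable_fun_prod _ fun j _ => hf.comp (measurable_pi_apply j)
    have := lintegral_split (0 : Fin (n + 1)) hf hH
    simp only [Fin.zero_succAbove] at this
    rw [this, h1, ih, one_mul]

lemma fi_tensor {d N : ℕ} {ν γ : ℝ} (hN : 1 ≤ N) {f : Euc d → ℝ} (hf : IsProbDensity f) :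
    fisherInfo d N ν γ (fun V => ∏ i, f (V i))
          = fracSobolevSq d (ν/2) (fun v => jap v ^ (γ/2) * Real.sqrt (f v)) := by
  obtain ⟨n, rfl⟩ : ∃ n, N = n + 1 := ⟨N - 1, by omega⟩
  set S := fracSobolevSq d (ν/2) (fun v => jap v ^ (γ/2) * Real.sqrt (f v)) with hS
  have hfo : Measurable fun x => ENNReal.ofReal (f x) := hf.1.ennreal_ofReal
  have hH : Measurable fun W : Fin n → Euc d => ∏ j, ENNReal.ofReal (f (W j)) :=
    Finset.measurable_fun_prod _ fun j _ => hfo.comp (measurable_pi_apply j)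
  have hFm : Measurable fun p : Euc d × Euc d =>
      ENNReal.ofReal ((jap p.1 ^ (γ/2) * √(f p.1) - jap p.2 ^ (γ/2) * √(f p.2)) ^ 2
        / ‖p.1 - p.2‖ ^ ((d : ℝ) + ν)) := by
    have hj := (jap_rpow_cont (d := d) (γ/2)).measurable.mul hf.1.sqrt
    exact Measurable.ennreal_ofReal (Measurable.div
      (Measurable.pow_const ((hj.comp measurable_fst).sub (hj.comp measurable_snd)) 2)
      (Measurable.pow_const (measurable_fst.sub measurable_snd).norm _))
  have hterm : ∀ i : Fin (n + 1), (∫⁻ V : Fin (n + 1) → Euc d, ∫⁻ w : Euc d,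
    ENNReal.ofReal ((jap (V i) ^ (γ/2) * Real.sqrt (∏ j, f (V j))
      - jap w ^ (γ/2) * Real.sqrt (∏ j, f (Function.update V i w j)))^2
      / ‖V i - w‖ ^ ((d : ℝ) + ν))) = S := by
    intro i
    have hsp := lintegral_split i (hFm.lintegral_prod_right' (ν := volume)) hH
    rw [lintegral_tensor hfo hf.2.2 n, mul_one] at hsp
    have hS' : S = ∫⁻ x : Euc d, ∫⁻ y : Euc d,
      ENNReal.ofReal ((jap x ^ (γ/2) * √(f x) - jap y ^ (γ/2) * √(f y)) ^ 2
        / ‖x - y‖ ^ ((d : ℝ) + ν)) := by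
      rw [hS]
      unfold fracSobolevSq
      rw [show 2 * (ν / 2) = ν by ring]
    rw [hS', ← hsp]
    refine lintegral_congr fun V => ?_
    rw [← ENNReal.ofReal_prod_of_nonneg (fun j _ => hf.2.1 _),
      ← lintegral_mul_const' _ _ ENNReal.ofReal_ne_top]
    refine lintegral_congr fun w => ?_
    have hP : 0 ≤ ∏ j, f (V (i.succAbove j)) := Finset.prod_nonneg fun j _ => hf.2.1 _
    rw [← ENNReal.ofReal_mul (by positivity)]
    congr 1
    rw [Fin.prod_univ_succAbove _ i, Fin.prod_univ_succAbove _ i]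
    simp only [Function.update_self, ne_eq, Fin.succAbove_ne, not_false_eq_true,
      Function.update_of_ne]
    rw [Real.sqrt_mul (hf.2.1 _), Real.sqrt_mul (hf.2.1 _), div_mul_eq_mul_div]
    congr 1
    linear_combination (jap (V i) ^ (γ/2) * √(f (V i)) - jap w ^ (γ/2) * √(f w)) ^ 2
      * Real.sq_sqrt hP
  unfold fisherInfo
  rw [Finset.sum_congr rfl fun i _ => hterm i]
  simp only [Finset.sum_const, Finset.card_univ, Fintype.card_fin, nsmul_eq_mul]
  rw [← mul_assoc, ENNReal.inv_mul_cancel (by simp) (by simp), one_mul]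

end FI

/-- the weighted fractional Fisher information `I^N_{ν,γ}` is
(a) convex, (b) lower semicontinuous w.r.t. weak convergence of probability densities,
and (c) tensorizes: `I^N_{ν,γ}(f^{⊗N}) = |⟨·⟩^{γ/2}√f|²_{H^{ν/2}(ℝ^d)}`. -/
theorem stmt_11 (d : ℕ) (hd : 1 ≤ d) (ν γ : ℝ)
    (hν : ν ∈ Set.Ioo (0 : ℝ) 2) (hγ : γ ≤ 0) (N : ℕ) (hN : 1 ≤ N) :
    -- (a) convexity
    (∀ G H : (Fin N → Euc d) → ℝ, IsProbDensity G → IsProbDensity H →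
      ∀ t : ℝ, t ∈ Set.Icc (0 : ℝ) 1 →
        fisherInfo d N ν γ (fun V => t * G V + (1-t) * H V)
          ≤ ENNReal.ofReal t * fisherInfo d N ν γ G
            + ENNReal.ofReal (1-t) * fisherInfo d N ν γ H)
    -- (b) lower semicontinuity along weak convergence
    ∧ (∀ (Gs : ℕ → (Fin N → Euc d) → ℝ) (G : (Fin N → Euc d) → ℝ),
        (∀ n, IsProbDensity (Gs n)) → IsProbDensity G →
        (∀ φ : BoundedContinuousFunction (Fin N → Euc d) ℝ,
          Filter.Tendsto (fun n => ∫ V, φ V * Gs n V) Filter.atTop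
            (nhds (∫ V, φ V * G V))) →
        fisherInfo d N ν γ G ≤ Filter.liminf (fun n => fisherInfo d N ν γ (Gs n)) Filter.atTop)
    -- (c) tensorization
    ∧ (∀ f : Euc d → ℝ, IsProbDensity f →
        fisherInfo d N ν γ (fun V => ∏ i, f (V i))
          = fracSobolevSq d (ν/2) (fun v => jap v ^ (γ/2) * Real.sqrt (f v))) := by
  exact ⟨fun G H hG hH t ht => fi_convex hG hH ht,
    fun Gs G hGs hG h => fi_lsc hν.1 hγ hN hGs hG h,
    fun f hf => fi_tensor hN hf⟩

end
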